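/- MoV_wUC satisfies neither w-degree-consistency nor equal-w-degree-consistency: there exist an n, an n-weighted tournament T and alternatives x,y with wdeg(x) > wdeg(y) but MoV_wUC(x,T) < 0 < MoV_wUC(y,T); and there exist an n, an n-weighted tournament T' and alternatives x,y with wdeg(x) = wdeg(y) but MoV_wUC(x,T') < 0 < MoV_wUC(y,T'). -/

import Mathlib

/-!
Every margin of victory of an alternative that can change status is nonzero, with the sign
dictated by membership (`MoV_pos`, `MoV_neg`): a reversal of size `0` is identically zero and
changes nothing, and the infimum of a nonempty set of positive integers is positive. It thus
suffices to give tournaments in which `x` is w-covered, `y` is not, `x` has at least the weighted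
outdegree of `y`, and some reversal changes the status of each.

With `n = 2` and alternatives `z, y, x, c`, let `z` beat `x` and `c` by `2 : 0`, let `y` tie with
`z` and `x`, and let `c` beat `y` by `2 : 0`. Then `z` w-covers `x`, while `y` is uncovered: the
only alternative with a positive margin over `y` is `c`, which does worse than `y` against `z`.
Now `y` has weighted outdegree `2`, and `x` has `3` or `2` according to whether it beats `c` by
`2 : 0` or ties with it. Shifting one unit from `y` to `z` makes `z` w-cover `y`; shifting one unit
from `z` to `x` leaves nobody with a positive margin over `x`.
-/

/-- An `n`-weighted tournament on vertex set `V`. -/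
structure WTournament (V : Type) (n : ℕ) where
  w : V → V → ℤ
  diag : ∀ x, w x x = 0
  nonneg : ∀ x y, x ≠ y → 0 ≤ w x y
  compl : ∀ x y, x ≠ y → w x y + w y x = (n : ℤ)

namespace WTournament

variable {V : Type} {n : ℕ}

/-- The (majority) margin of `x` over `y`. -/
def margin (T : WTournament V n) (x y : V) : ℤ :=
  T.w x y - T.w y x

/-- The Borda score of `x`. -/
def sBO [Fintype V] (T : WTournament V n) (x : V) : ℤ :=
  ∑ z, T.w x z

/-- The set of Borda winners. -/
def BO [Fintype V] (T : WTournament V n) : Set V :=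
  {x | ∀ y, T.sBO y ≤ T.sBO x}

/-- The weighted outdegree of `x`. -/
def wdeg [Fintype V] (T : WTournament V n) (x : V) : ℤ :=
  ∑ z, T.w x z

/-- `x` w-covers `y`. -/
def WCovers (T : WTournament V n) (x y : V) : Prop :=
  0 < T.margin x y ∧ ∀ z, z ≠ x → z ≠ y → T.w y z ≤ T.w x z

/-- The weighted uncovered set. -/
def wUC (T : WTournament V n) : Set V :=
  {x | ∀ y, ¬ T.WCovers y x}

/-- The consecutive edges of a vertex sequence. -/
def seqEdges (l : List V) : List (V × V) :=
  l.zip l.tail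

/-- A dominance cycle. -/
def IsDominanceCycle (T : WTournament V n) (l : List V) : Prop :=
  2 ≤ l.length ∧ l.head? = l.getLast? ∧ ∀ e ∈ seqEdges l, 0 < T.margin e.1 e.2

/-- The splitting number of a cycle. -/
def splitNum (T : WTournament V n) (l : List V) : ℤ :=
  ((seqEdges l).map fun e => T.margin e.1 e.2).foldr min (n : ℤ)

/-- `e` is a splitting edge of the cycle `l`. -/
def IsSplittingEdge (T : WTournament V n) (l : List V) (e : V × V) : Prop :=
  e ∈ seqEdges l ∧ T.margin e.1 e.2 = T.splitNum l

/-- `(x, y)` is an edge of the margin graph surviving the deletion of every splitting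
edge of every dominance cycle (i.e. an edge of `M_D`). -/
def EdgeMD (T : WTournament V n) (x y : V) : Prop :=
  0 < T.margin x y ∧
    ¬ ∃ l : List V, T.IsDominanceCycle l ∧ T.IsSplittingEdge l (x, y)

/-- The set of Split Cycle winners. -/
def SC (T : WTournament V n) : Set V :=
  {x | ∀ y, ¬ T.EdgeMD y x}

/-- A reversal function for the tournament `T`. -/
structure Reversal (T : WTournament V n) where
  r : V → V → ℤ
  antisymm : ∀ x y, r x y = - r y x
  lo : ∀ x y, x ≠ y → 0 ≤ T.w x y + r x y
  hi : ∀ x y, x ≠ y → T.w x y + r x y ≤ (n : ℤ)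

/-- The size of a reversal function. -/
def Reversal.size [Fintype V] {T : WTournament V n} (R : Reversal T) : ℤ :=
  ∑ x : V, ∑ y : V, max (R.r x y) 0

/-- The tournament obtained from `T` by the reversal `R`. -/
def apply (T : WTournament V n) (R : Reversal T) : WTournament V n :=
  { w := fun x y => T.w x y + R.r x y
    diag := fun x => by
      have h := R.antisymm x x
      have h1 := T.diag x
      show T.w x x + R.r x x = 0
      linarith
    nonneg := fun x y h => R.lo x y h
    compl := fun x y h => by
      have h1 := R.antisymm x y
      have h2 := T.compl x y h
      show (T.w x y + R.r x y) + (T.w y x + R.r y x) = (n : ℤ)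
      linarith }

/-- `R` witnesses the margin of victory of `a`: it is a destructive reversal set if
`a` is a winner and a constructive reversal set if `a` is a non-winner. -/
def IsMoVWitness (S : WTournament V n → Set V) (T : WTournament V n) (a : V)
    (R : Reversal T) : Prop :=
  a ∈ S T ↔ a ∉ S (T.apply R)

open Classical in
/-- The margin of victory of `a` in `T` with respect to the tournament solution `S`:
the minimum size of a destructive reversal set for winners, and minus the minimum
size of a constructive reversal set for non-winners. -/
noncomputable def MoV [Fintype V] (S : WTournament V n → Set V)
    (T : WTournament V n) (a : V) : ℤ :=
  if a ∈ S T then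
    sInf {k : ℤ | ∃ R : Reversal T, IsMoVWitness S T a R ∧ R.size = k}
  else
    - sInf {k : ℤ | ∃ R : Reversal T, IsMoVWitness S T a R ∧ R.size = k}

/-- The reversal values with `R (a, b) = 1`, `R (b, a) = -1` and `0` elsewhere. -/
def singleFun [DecidableEq V] (a b : V) : V → V → ℤ := fun p q =>
  if p = a ∧ q = b then 1 else if p = b ∧ q = a then -1 else 0

/-- The reversal values with `Q (b, c) = -1`, `Q (c, b) = 1`, `Q (a, c) = 1`,
`Q (c, a) = -1` and `0` elsewhere. -/
def transferFun [DecidableEq V] (a b c : V) : V → V → ℤ := fun p q =>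
  if p = b ∧ q = c then -1
  else if p = c ∧ q = b then 1
  else if p = a ∧ q = c then 1
  else if p = c ∧ q = a then -1
  else 0

/-- A monotonic tournament solution. -/
def IsMonotonic [DecidableEq V] (S : WTournament V n → Set V) : Prop :=
  ∀ (T : WTournament V n) (a b : V) (R : Reversal T),
    a ≠ b → a ∈ S T → T.w a b < (n : ℤ) → R.r = singleFun a b →
    a ∈ S (T.apply R)

/-- A transfer-monotonic tournament solution. -/
def IsTransferMonotonic [DecidableEq V] (S : WTournament V n → Set V) : Prop :=
  ∀ (T : WTournament V n) (a b c : V) (Q : Reversal T),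
    a ≠ b → a ≠ c → b ≠ c → a ∈ S T → 0 < T.w b c → T.w a c < (n : ℤ) →
    Q.r = transferFun a b c → a ∈ S (T.apply Q)

end WTournament

namespace WTournament

variable {V : Type} {n : ℕ}

lemma Reversal.size_nonneg [Fintype V] {T : WTournament V n} (R : Reversal T) :
    0 ≤ R.size :=
  Finset.sum_nonneg fun _ _ => Finset.sum_nonneg fun _ _ => le_max_right _ _

lemma Reversal.eq_zero_of_size_eq_zero [Fintype V] {T : WTournament V n} (R : Reversal T)
    (h : R.size = 0) (x y : V) : R.r x y = 0 := by
  have key : ∀ a b, R.r a b ≤ 0 := by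
    intro a b
    have h1 := (Finset.sum_eq_zero_iff_of_nonneg (fun _ _ =>
      Finset.sum_nonneg fun _ _ => le_max_right _ _)).1 h a (Finset.mem_univ a)
    have h2 := (Finset.sum_eq_zero_iff_of_nonneg (fun _ _ => le_max_right _ _)).1 h1 b
      (Finset.mem_univ b)
    exact max_eq_right_iff.1 h2
  have h1 := key x y
  have h2 := key y x
  have h3 := R.antisymm x y
  omega

lemma Reversal.size_pos_of_isMoVWitness [Fintype V] {S : WTournament V n → Set V}
    {T : WTournament V n} {a : V} {R : Reversal T} (h : IsMoVWitness S T a R) :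
    0 < R.size := by
  refine lt_of_le_of_ne R.size_nonneg fun h0 => ?_
  have hT : T.apply R = T := by
    obtain ⟨w, _, _, _⟩ := T
    simp [apply, R.eq_zero_of_size_eq_zero h0.symm]
  rw [IsMoVWitness, hT] at h
  tauto

lemma sInf_witness_size_pos [Fintype V] {S : WTournament V n → Set V}
    {T : WTournament V n} {a : V} {R : Reversal T} (h : IsMoVWitness S T a R) :
    0 < sInf {k : ℤ | ∃ R : Reversal T, IsMoVWitness S T a R ∧ R.size = k} := by
  obtain ⟨R', h', hk⟩ := Int.csInf_mem
    (s := {k : ℤ | ∃ R : Reversal T, IsMoVWitness S T a R ∧ R.size = k})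
    ⟨R.size, R, h, rfl⟩ ⟨0, by rintro _ ⟨R, _, rfl⟩; exact R.size_nonneg⟩
  rw [← hk]
  exact R'.size_pos_of_isMoVWitness h'

lemma MoV_pos [Fintype V] {S : WTournament V n → Set V} {T : WTournament V n} {a : V}
    (ha : a ∈ S T) (R : Reversal T) (hR : a ∉ S (T.apply R)) : 0 < MoV S T a := by
  rw [MoV, if_pos ha]
  exact sInf_witness_size_pos (R := R) (by simp [IsMoVWitness, ha, hR])

lemma MoV_neg [Fintype V] {S : WTournament V n → Set V} {T : WTournament V n} {a : V}
    (ha : a ∉ S T) (R : Reversal T) (hR : a ∈ S (T.apply R)) : MoV S T a < 0 := by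
  rw [MoV, if_neg ha]
  exact neg_neg_of_pos (sInf_witness_size_pos (R := R) (by simp [IsMoVWitness, ha, hR]))

/-- The counterexample weights, with `z, y, x, c` encoded as `0, 1, 2, 3`. The parameter says
whether `x` beats `c` by `2 : 0` (`true`) or ties with it (`false`). -/
def exW (b : Bool) : Fin 4 → Fin 4 → ℤ :=
  ![![0, 1, 2, 2], ![1, 0, 1, 0], ![0, 1, 0, if b then 2 else 1],
    ![0, 2, if b then 0 else 1, 0]]

/-- The `2`-weighted tournament with weights `exW b`. -/
def exT (b : Bool) : WTournament (Fin 4) 2 where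
  w := exW b
  diag := by revert b; decide
  nonneg := by revert b; decide
  compl := by revert b; decide

/-- One unit is shifted from `y` to `z`. -/
def revY (b : Bool) : Reversal (exT b) where
  r := singleFun 0 1
  antisymm := by decide
  lo := by revert b; decide
  hi := by revert b; decide

/-- One unit is shifted from `z` to `x`. -/
def revX (b : Bool) : Reversal (exT b) where
  r := singleFun 2 0
  antisymm := by decide
  lo := by revert b; decide
  hi := by revert b; decide

instance (T : WTournament (Fin 4) 2) (x y : Fin 4) : Decidable (T.WCovers x y) := by
  unfold WCovers; infer_instance

instance (T : WTournament (Fin 4) 2) (x : Fin 4) : Decidable (x ∈ T.wUC) :=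
  inferInstanceAs (Decidable (∀ y, ¬ T.WCovers y x))

lemma MoV_exT_x_neg (b : Bool) : MoV wUC (exT b) 2 < 0 :=
  MoV_neg (by revert b; decide) (revX b) (by revert b; decide)

lemma MoV_exT_y_pos (b : Bool) : 0 < MoV wUC (exT b) 1 :=
  MoV_pos (by revert b; decide) (revY b) (by revert b; decide)

end WTournament

/-- `MoV_wUC` satisfies neither w-degree-consistency nor
equal-w-degree-consistency. -/
theorem MoV_wUC_not_degree_consistent :
    (∃ (n m : ℕ) (T : WTournament (Fin m) n) (x y : Fin m),
      T.wdeg y < T.wdeg x ∧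
      WTournament.MoV WTournament.wUC T x < 0 ∧
      0 < WTournament.MoV WTournament.wUC T y) ∧
    (∃ (n m : ℕ) (T : WTournament (Fin m) n) (x y : Fin m),
      T.wdeg x = T.wdeg y ∧
      WTournament.MoV WTournament.wUC T x < 0 ∧
      0 < WTournament.MoV WTournament.wUC T y) := by
  exact ⟨⟨2, 4, WTournament.exT true, 2, 1, by decide,
      WTournament.MoV_exT_x_neg _, WTournament.MoV_exT_y_pos _⟩,
    ⟨2, 4, WTournament.exT false, 2, 1, by decide,
      WTournament.MoV_exT_x_neg _, WTournament.MoV_exT_y_pos _⟩⟩
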